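/- arXiv:2410.08789 — 3 statements merged into one kernel-verified Lean document; each statement's English description precedes it below -/
import Mathlib

section
/- Let f and g be almost permutations of ℕ. Then f =* g if and only if f[A] =* g[A] for every A ⊆ ℕ. -/
open Set Filter


/-- An almost permutation of `ℕ`: a bijection between a cofinite subset `dom`
of `ℕ` and a cofinite subset (its range) of `ℕ`.  The function `toFun` carries
arbitrary (junk) values outside of `dom`. -/
structure AlmostPerm where
  dom : Set ℕ
  toFun : ℕ → ℕ
  cofinite_dom : domᶜ.Finite
  injOn : Set.InjOn toFun dom
  cofinite_ran : (toFun '' dom)ᶜ.Finite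

namespace AlmostPerm

/-- The range of an almost permutation. -/
def ran (f : AlmostPerm) : Set ℕ := f.toFun '' f.dom

/-- The image `f[A]` of a set under an almost permutation. -/
def image (f : AlmostPerm) (A : Set ℕ) : Set ℕ := f.toFun '' (A ∩ f.dom)

/-- The (prodigal) index `|ℕ \ dom f| − |ℕ \ ran f|`. -/
noncomputable def index (f : AlmostPerm) : ℤ :=
  (Nat.card ↥(f.domᶜ) : ℤ) - (Nat.card ↥(f.ranᶜ) : ℤ)

/-- The one-step relation: `b = f(a)`. -/
def step (f : AlmostPerm) (a b : ℕ) : Prop := a ∈ f.dom ∧ f.toFun a = b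

/-- The orbit `O_f(n) = {f^k(n) : k ∈ ℤ, f^k(n) defined}`. -/
def orbit (f : AlmostPerm) (n : ℕ) : Set ℕ :=
  {m | Relation.ReflTransGen f.step n m ∨ Relation.ReflTransGen f.step m n}

end AlmostPerm


/-- `A =* B`: almost equality of sets (finite symmetric difference). -/
def SetEqStar (A B : Set ℕ) : Prop := (symmDiff A B).Finite


/-- `f =* g` for almost permutations: they agree at all but finitely many
points of `dom f ∩ dom g`. -/
def FunEqStar (f g : AlmostPerm) : Prop :=
  {x | x ∈ f.dom ∩ g.dom ∧ f.toFun x ≠ g.toFun x}.Finite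

/-!
An infinite set on which two functions differ pointwise contains an infinite subset `A` on which
their images are disjoint. If one of the functions has an infinite fibre, that fibre is such an
`A`; otherwise each choice of an element of `A` rules out only finitely many later choices, and `A`
is built greedily. So if `f` and `g` differ at infinitely many points and `f` has finite fibres,
then `f '' A` is infinite and disjoint from `g '' A`.
-/

section Images

variable {α β : Type*} {f g : α → β} {s t : Set α}

theorem disjoint_image_inter_fiber (hne : ∀ x ∈ s, f x ≠ g x) (c : β) :
    Disjoint (f '' (s ∩ g ⁻¹' {c})) (g '' (s ∩ g ⁻¹' {c})) := by
  rw [disjoint_left]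
  rintro _ ⟨x, ⟨hxs, hxc⟩, rfl⟩ ⟨y, ⟨-, hyc⟩, hyx⟩
  exact hne x hxs (hyx.symm.trans (hyc.trans hxc.symm))

theorem finite_inter_preimage_of_finite_fibers {T : Set β} (hT : T.Finite)
    (hf : ∀ c, (s ∩ f ⁻¹' {c}).Finite) : (s ∩ f ⁻¹' T).Finite := by
  refine .of_finite_fibers f (hT.subset ?_) fun c _ ↦ (hf c).subset ?_
  · exact image_subset_iff.2 inter_subset_right
  · exact inter_subset_inter_left _ inter_subset_left

theorem exists_infinite_subset_disjoint_image_of_finite_fibers (hs : s.Infinite)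
    (hne : ∀ x ∈ s, f x ≠ g x) (hf : ∀ c, (s ∩ f ⁻¹' {c}).Finite)
    (hg : ∀ c, (s ∩ g ⁻¹' {c}).Finite) :
    ∃ A ⊆ s, A.Infinite ∧ Disjoint (f '' A) (g '' A) := by
  let Compatible (x y : α) : Prop := x ≠ y ∧ f x ≠ g y ∧ g x ≠ f y
  have exists_next (F : Finset α) : ∃ y ∈ s, ∀ x ∈ F, Compatible x y := by
    have excluded_finite : (↑F ∪ s ∩ g ⁻¹' (f '' F) ∪ s ∩ f ⁻¹' (g '' F)).Finite :=
      (F.finite_toSet.union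
        (finite_inter_preimage_of_finite_fibers (F.finite_toSet.image f) hg)).union
        (finite_inter_preimage_of_finite_fibers (F.finite_toSet.image g) hf)
    obtain ⟨y, hys, hy⟩ := (hs.sdiff excluded_finite).nonempty
    refine ⟨y, hys, fun x hx ↦ ⟨?_, fun hfg ↦ ?_, fun hgf ↦ ?_⟩⟩
    · rintro rfl
      exact hy (.inl (.inl hx))
    · exact hy (.inl (.inr ⟨hys, x, hx, hfg⟩))
    · exact hy (.inr ⟨hys, x, hx, hgf⟩)
  have : Std.Symm Compatible := ⟨fun _ _ h ↦ ⟨h.1.symm, h.2.2.symm, h.2.1.symm⟩⟩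
  obtain ⟨u, hus, hu⟩ := exists_seq_of_forall_finset_exists' (· ∈ s) Compatible
    fun F _ ↦ exists_next F
  have u_injective : u.Injective := fun m n hmn ↦ by_contra fun h ↦ (hu h).1 hmn
  refine ⟨range u, range_subset_iff.2 hus, infinite_range_of_injective u_injective, ?_⟩
  rw [disjoint_left]
  rintro _ ⟨_, ⟨m, rfl⟩, rfl⟩ ⟨_, ⟨n, rfl⟩, hnm⟩
  rcases eq_or_ne m n with rfl | hmn
  · exact hne (u m) (hus m) hnm.symm
  · exact (hu hmn).2.1 hnm.symm

theorem exists_infinite_subset_disjoint_image (hs : s.Infinite) (hne : ∀ x ∈ s, f x ≠ g x) :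
    ∃ A ⊆ s, A.Infinite ∧ Disjoint (f '' A) (g '' A) := by
  by_cases hf : ∀ c, (s ∩ f ⁻¹' {c}).Finite
  · by_cases hg : ∀ c, (s ∩ g ⁻¹' {c}).Finite
    · exact exists_infinite_subset_disjoint_image_of_finite_fibers hs hne hf hg
    · obtain ⟨c, hc⟩ := not_forall.1 hg
      exact ⟨_, inter_subset_left, hc, disjoint_image_inter_fiber hne c⟩
  · obtain ⟨c, hc⟩ := not_forall.1 hf
    exact ⟨_, inter_subset_left, hc,
      (disjoint_image_inter_fiber (fun x hx ↦ (hne x hx).symm) c).symm⟩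

theorem symmDiff_image_subset :
    symmDiff (f '' s) (g '' t) ⊆
      f '' (symmDiff s t ∪ {x | x ∈ s ∩ t ∧ f x ≠ g x}) ∪
        g '' (symmDiff s t ∪ {x | x ∈ s ∩ t ∧ f x ≠ g x}) := by
  rintro _ (⟨⟨x, hxs, rfl⟩, hx⟩ | ⟨⟨x, hxt, rfl⟩, hx⟩)
  · refine .inl ⟨x, ?_, rfl⟩
    by_cases hxt : x ∈ t
    · exact .inr ⟨⟨hxs, hxt⟩, fun hfg ↦ hx ⟨x, hxt, hfg.symm⟩⟩
    · exact .inl (.inl ⟨hxs, hxt⟩)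
  · refine .inr ⟨x, ?_, rfl⟩
    by_cases hxs : x ∈ s
    · exact .inr ⟨⟨hxs, hxt⟩, fun hfg ↦ hx ⟨x, hxs, hfg⟩⟩
    · exact .inl (.inr ⟨hxt, hxs⟩)

theorem finite_symmDiff_image (hst : (symmDiff s t).Finite)
    (hfg : {x | x ∈ s ∩ t ∧ f x ≠ g x}.Finite) : (symmDiff (f '' s) (g '' t)).Finite :=
  (((hst.union hfg).image f).union ((hst.union hfg).image g)).subset symmDiff_image_subset

theorem finite_ne_of_forall_finite_symmDiff_image (hf : ∀ c, (s ∩ f ⁻¹' {c}).Finite)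
    (h : ∀ A : Set α, (symmDiff (f '' (A ∩ s)) (g '' (A ∩ t))).Finite) :
    {x | x ∈ s ∩ t ∧ f x ≠ g x}.Finite := by
  by_contra hinf
  obtain ⟨A, hA, hAinf, hdisj⟩ :=
    exists_infinite_subset_disjoint_image (f := f) (g := g) hinf fun _ hx ↦ hx.2
  have hAs : A ⊆ s := fun x hx ↦ (hA hx).1.1
  have hAt : A ⊆ t := fun x hx ↦ (hA hx).1.2
  have symmDiff_finite : (symmDiff (f '' A) (g '' A)).Finite := by
    simpa only [inter_eq_left.2 hAs, inter_eq_left.2 hAt] using h A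
  have image_finite : (f '' A).Finite := symmDiff_finite.subset ((le_symmDiff_iff_left _ _).2 hdisj)
  exact hAinf (.of_finite_fibers f image_finite fun c _ ↦
    (hf c).subset (inter_subset_inter_left _ hAs))

theorem funEqStar_iff_forall_image_eqStar_general (hst : (symmDiff s t).Finite)
    (hf : ∀ c, (s ∩ f ⁻¹' {c}).Finite) :
    {x | x ∈ s ∩ t ∧ f x ≠ g x}.Finite ↔
      ∀ A : Set α, (symmDiff (f '' (A ∩ s)) (g '' (A ∩ t))).Finite := by
  refine ⟨fun hfg A ↦ finite_symmDiff_image ?_ ?_, finite_ne_of_forall_finite_symmDiff_image hf⟩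
  · rw [← inter_symmDiff_distrib_left]
    exact hst.inter_of_right A
  · exact hfg.subset fun x hx ↦ ⟨⟨hx.1.1.2, hx.1.2.2⟩, hx.2⟩

end Images

namespace AlmostPerm

theorem finite_symmDiff_dom (f g : AlmostPerm) : (symmDiff f.dom g.dom).Finite := by
  rw [← compl_symmDiff_compl]
  exact f.cofinite_dom.symmDiff g.cofinite_dom

theorem finite_fiber (f : AlmostPerm) (c : ℕ) : (f.dom ∩ f.toFun ⁻¹' {c}).Finite :=
  Set.Subsingleton.finite fun _ hx _ hy ↦ f.injOn hx.1 hy.1 (hx.2.trans hy.2.symm)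

end AlmostPerm

/-- For almost permutations `f` and `g` of `ℕ`:
`f =* g` if and only if `f[A] =* g[A]` for every `A ⊆ ℕ`. -/
theorem funEqStar_iff_forall_image_eqStar (f g : AlmostPerm) :
    FunEqStar f g ↔ ∀ A : Set ℕ, SetEqStar (f.image A) (g.image A) :=
  funEqStar_iff_forall_image_eqStar_general (f.finite_symmDiff_dom g) f.finite_fiber
end

section
/- If f and g are equivalent almost permutations of ℕ (i.e., there is an almost permutation h of ℕ with h∘f =* g∘h), then Index(f) = Index(g). -/
open Set Filter


/-- Domain of the composition `g ∘ f` of almost permutations. -/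
def compDom (g f : AlmostPerm) : Set ℕ := {n | n ∈ f.dom ∧ f.toFun n ∈ g.dom}


/-- `h ∘ f =* g ∘ h` for almost permutations `h`, `f`, `g`. -/
def ConjEqStar (h f g : AlmostPerm) : Prop :=
  {n | n ∈ compDom h f ∩ compDom g h ∧ h.toFun (f.toFun n) ≠ g.toFun (h.toFun n)}.Finite

/-- Equivalence of almost permutations: `f ∼ g` iff `h∘f =* g∘h` for some
almost permutation `h`. -/
def APEquiv (f g : AlmostPerm) : Prop := ∃ h : AlmostPerm, ConjEqStar h f g

/-!
Deleting finitely many points from the domain of an almost permutation deletes equally many points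
from its range, so the index is unchanged; in particular it is invariant under `=*`. Once `f` and
`g` are shrunk so that `ran f = dom g`, the index of `g ∘ f` is a telescoping sum, so the index is
additive under composition. Hence `Index h + Index f = Index (h ∘ f) = Index (g ∘ h) =
Index g + Index h`, and `Index h` cancels.
-/

section IndexOn

variable {α β γ : Type*} {f : α → β} {s t : Set α}

/-- The index of the restriction of a function `f` to a set `s`, the number of points outside `s`
minus the number of points outside `f '' s`. It is meaningful only if both sets of points are
finite, since `Set.ncard` is `0` on infinite sets. -/
noncomputable def indexOn (f : α → β) (s : Set α) : ℤ := sᶜ.ncard - (f '' s)ᶜ.ncard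

theorem indexOn_congr {g : α → β} (h : EqOn f g s) : indexOn f s = indexOn g s := by
  rw [indexOn, indexOn, h.image_eq]

theorem indexOn_comp (g : β → γ) (f : α → β) (s : Set α) :
    indexOn (g ∘ f) s = indexOn f s + indexOn g (f '' s) := by
  rw [indexOn, indexOn, indexOn, image_comp, sub_add_sub_cancel]

theorem finite_compl_image (hs : (f '' s)ᶜ.Finite) (ht : tᶜ.Finite) : (f '' t)ᶜ.Finite := by
  refine (hs.union (ht.image f)).subset fun y hy ↦ ?_
  by_cases hys : y ∈ f '' s
  · obtain ⟨x, -, rfl⟩ := hys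
    exact .inr (mem_image_of_mem f fun hxt ↦ hy (mem_image_of_mem f hxt))
  · exact .inl hys

theorem finite_compl_inter_preimage {u : Set β} (hf : InjOn f s) (hs : sᶜ.Finite)
    (hu : uᶜ.Finite) : (s ∩ f ⁻¹' u)ᶜ.Finite := by
  have hbad : (s ∩ f ⁻¹' uᶜ).Finite :=
    .of_finite_image (hu.subset (image_subset_iff.2 inter_subset_right))
      (hf.mono inter_subset_left)
  refine (hs.union hbad).subset fun x hx ↦ ?_
  by_cases hxs : x ∈ s
  · exact .inr ⟨hxs, fun hxu ↦ hx ⟨hxs, hxu⟩⟩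
  · exact .inl hxs

theorem ncard_compl_eq_ncard_compl_add_ncard_sdiff (hts : t ⊆ s) (ht : tᶜ.Finite) :
    tᶜ.ncard = sᶜ.ncard + (s \ t).ncard := by
  rw [← ncard_sdiff_add_ncard_of_subset (compl_subset_compl.2 hts) ht, compl_sdiff_compl, add_comm]

theorem indexOn_eq_of_subset (hf : InjOn f s) (hs : (f '' s)ᶜ.Finite) (hts : t ⊆ s)
    (ht : tᶜ.Finite) : indexOn f t = indexOn f s := by
  have hdom : tᶜ.ncard = sᶜ.ncard + (s \ t).ncard :=
    ncard_compl_eq_ncard_compl_add_ncard_sdiff hts ht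
  have hran : (f '' t)ᶜ.ncard = (f '' s)ᶜ.ncard + (s \ t).ncard := by
    rw [ncard_compl_eq_ncard_compl_add_ncard_sdiff (image_mono hts) (finite_compl_image hs ht),
      ← hf.image_sdiff_subset hts, (hf.mono sdiff_subset).ncard_image]
  rw [indexOn, indexOn, hdom, hran]
  push_cast
  ring

end IndexOn

namespace AlmostPerm

variable {f g h : AlmostPerm}

theorem indexOn_eq_index {s : Set ℕ} (hs : s ⊆ f.dom) (hsc : sᶜ.Finite) :
    indexOn f.toFun s = f.index :=
  indexOn_eq_of_subset f.injOn f.cofinite_ran hs hsc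

theorem finite_compl_compDom (g f : AlmostPerm) : (compDom g f)ᶜ.Finite :=
  finite_compl_inter_preimage f.injOn f.cofinite_dom g.cofinite_dom

/-- The composition `g ∘ f` as an almost permutation, with domain `compDom g f`. -/
def comp (g f : AlmostPerm) : AlmostPerm where
  dom := compDom g f
  toFun := g.toFun ∘ f.toFun
  cofinite_dom := finite_compl_compDom g f
  injOn := g.injOn.comp (f.injOn.mono fun _ hn ↦ hn.1) fun _ hn ↦ hn.2
  cofinite_ran := by
    rw [image_comp]
    exact finite_compl_image g.cofinite_ran
      (finite_compl_image f.cofinite_ran (finite_compl_compDom g f))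

theorem index_comp (g f : AlmostPerm) : (g.comp f).index = g.index + f.index := by
  have hD : (compDom g f)ᶜ.Finite := finite_compl_compDom g f
  calc (g.comp f).index
      = indexOn f.toFun (compDom g f) + indexOn g.toFun (f.toFun '' compDom g f) :=
        indexOn_comp g.toFun f.toFun (compDom g f)
    _ = f.index + g.index := by
        rw [indexOn_eq_index (fun _ hn ↦ hn.1) hD,
          indexOn_eq_index (image_subset_iff.2 fun _ hn ↦ hn.2)
            (finite_compl_image f.cofinite_ran hD)]
    _ = g.index + f.index := add_comm _ _

/-- Almost equality `f =* g`: the values differ at only finitely many points of the common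
domain. -/
def EqStar (f g : AlmostPerm) : Prop := {n | n ∈ f.dom ∩ g.dom ∧ f.toFun n ≠ g.toFun n}.Finite

theorem EqStar.index_eq (hfg : EqStar f g) : f.index = g.index := by
  set D : Set ℕ := {n | n ∈ f.dom ∩ g.dom ∧ f.toFun n = g.toFun n}
  have hD : Dᶜ.Finite := by
    refine ((f.cofinite_dom.union g.cofinite_dom).union hfg).subset fun n hn ↦ ?_
    by_cases hdom : n ∈ f.dom ∩ g.dom
    · exact .inr ⟨hdom, fun heq ↦ hn ⟨hdom, heq⟩⟩
    · exact .inl (compl_inter f.dom g.dom ▸ hdom)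
  calc f.index
      = indexOn f.toFun D := (indexOn_eq_index (fun _ hn ↦ hn.1.1) hD).symm
    _ = indexOn g.toFun D := indexOn_congr fun _ hn ↦ hn.2
    _ = g.index := indexOn_eq_index (fun _ hn ↦ hn.1.2) hD

theorem conjEqStar_iff_eqStar_comp : ConjEqStar h f g ↔ EqStar (h.comp f) (g.comp h) := Iff.rfl

end AlmostPerm

/-- Equivalent almost permutations have the same index. -/
theorem index_eq_of_apEquiv (f g : AlmostPerm) (h : APEquiv f g) :
    f.index = g.index := by
  obtain ⟨h, hconj⟩ := h
  have hcomp : h.index + f.index = h.index + g.index :=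
    calc h.index + f.index
        = (h.comp f).index := (AlmostPerm.index_comp h f).symm
      _ = (g.comp h).index := (AlmostPerm.conjEqStar_iff_eqStar_comp.1 hconj).index_eq
      _ = g.index + h.index := AlmostPerm.index_comp g h
      _ = h.index + g.index := add_comm _ _
  exact add_left_cancel hcomp
end

section
/- Let f be an almost permutation of ℕ, and let O be either an ℕ-like orbit of f, a reverse ℕ-like orbit of f, or a set of the form O⁺_f(n) or O⁻_f(n) for some n with a ℤ-like orbit. If A ⊆ ℕ and both O ∩ A and O \ A are infinite, then f[A] is not almost equal to A; that is, α_f([A]) ≠ [A], so [A] ∉ FIX_{α_f}. -/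
/-!
Almost invariance of `A` under `f` means that `x ∈ A ↔ f x ∈ A` for all but finitely many `x`. Along
an infinite forward orbit `n, f n, f² n, …` the terms are distinct, so membership in `A` is
eventually constant and `A` cannot split the orbit. Backward orbits are forward orbits of `f⁻¹`,
under which `A` is almost invariant as well, and an ℕ-like (reverse ℕ-like) orbit is the forward
(backward) orbit of its endpoint.
-/

open Set Filter


namespace AlmostPerm

/-- `O` is an ℕ-like orbit of `f`: the orbit of some `n ∈ dom f` with
`f^k(n) ∉ ran f` for some `k < 0`. -/
def IsNLikeOrbit (f : AlmostPerm) (O : Set ℕ) : Prop :=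
  ∃ n ∈ f.dom, O = f.orbit n ∧ ∃ m, Relation.TransGen f.step m n ∧ m ∉ f.ran

/-- `O` is a reverse ℕ-like orbit of `f`: the orbit of some `n ∈ dom f` with
`f^k(n) ∉ dom f` for some `k > 0`. -/
def IsRevNLikeOrbit (f : AlmostPerm) (O : Set ℕ) : Prop :=
  ∃ n ∈ f.dom, O = f.orbit n ∧ ∃ m, Relation.TransGen f.step n m ∧ m ∉ f.dom

/-- `n` has a ℤ-like orbit: its orbit is infinite and `f^k(n)` is defined for
all `k ∈ ℤ`. -/
def HasZLikeOrbit (f : AlmostPerm) (n : ℕ) : Prop :=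
  (f.orbit n).Infinite ∧ (∀ m, Relation.ReflTransGen f.step n m → m ∈ f.dom) ∧
    (∀ m, Relation.ReflTransGen f.step m n → m ∈ f.ran)

/-- `O⁺_f(n) = {f^k(n) : k > 0}`. -/
def posOrbit (f : AlmostPerm) (n : ℕ) : Set ℕ := {m | Relation.TransGen f.step n m}

/-- `O⁻_f(n) = {f^k(n) : k < 0}`. -/
def negOrbit (f : AlmostPerm) (n : ℕ) : Set ℕ := {m | Relation.TransGen f.step m n}

/-- `O` is an ℕ-like orbit, a reverse ℕ-like orbit, or one of the sets
`O⁺_f(n)`, `O⁻_f(n)` for some `n` with a ℤ-like orbit. -/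
def GoodOrbit (f : AlmostPerm) (O : Set ℕ) : Prop :=
  f.IsNLikeOrbit O ∨ f.IsRevNLikeOrbit O ∨
    ∃ n, f.HasZLikeOrbit n ∧ (O = f.posOrbit n ∨ O = f.negOrbit n)

end AlmostPerm


section Sequences

variable {α : Type*} {A : Set α}

theorem finite_range_inter_or_diff_of_eventually {s : ℕ → α}
    (h : ∀ᶠ k in atTop, s k ∈ A ↔ s (k + 1) ∈ A) :
    (range s ∩ A).Finite ∨ (range s \ A).Finite := by
  have hconst : EventuallyConst (s ⁻¹' A) atTop := by
    obtain ⟨K, hK⟩ := eventually_atTop.1 h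
    exact eventuallyConst_atTop_nat.2 ⟨K, fun k hk ↦ propext (hK k hk).symm⟩
  rw [eventuallyConst_set, ← Nat.cofinite_eq_atTop] at hconst
  refine hconst.symm.imp (fun hout ↦ ?_) (fun hin ↦ ?_)
  · refine ((eventually_cofinite.1 hout).image s).subset ?_
    rintro _ ⟨⟨k, rfl⟩, hk⟩
    exact mem_image_of_mem s (not_not.2 hk)
  · refine ((eventually_cofinite.1 hin).image s).subset ?_
    rintro _ ⟨⟨k, rfl⟩, hk⟩
    exact mem_image_of_mem s hk

theorem finite_range_iterate_of_eq {g : α → α} {a : α} {i j : ℕ} (hij : i < j)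
    (h : g^[i] a = g^[j] a) : (range fun k ↦ g^[k] a).Finite := by
  have hmaps : MapsTo g ((fun k ↦ g^[k] a) '' Iio j) ((fun k ↦ g^[k] a) '' Iio j) := by
    rintro _ ⟨k, hk, rfl⟩
    rcases (Nat.succ_le_of_lt hk).lt_or_eq with hlt | rfl
    · exact ⟨k + 1, hlt, Function.iterate_succ_apply' g k a⟩
    · exact ⟨i, hij, h.trans (Function.iterate_succ_apply' g k a)⟩
  refine ((finite_Iio j).image fun k ↦ g^[k] a).subset ?_
  rintro _ ⟨k, rfl⟩
  exact hmaps.iterate k ⟨0, i.zero_le.trans_lt hij, rfl⟩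

theorem injective_iterate_of_infinite_range {g : α → α} {a : α}
    (h : (range fun k ↦ g^[k] a).Infinite) : Function.Injective fun k ↦ g^[k] a :=
  .of_lt_imp_ne fun _ _ hij heq ↦ h (finite_range_iterate_of_eq hij heq)

theorem finite_range_iterate_inter_or_diff {g : α → α} (hA : A =ᶠ[cofinite] g ⁻¹' A) (a : α) :
    ((range fun k ↦ g^[k] a) ∩ A).Finite ∨ ((range fun k ↦ g^[k] a) \ A).Finite := by
  by_cases hfin : (range fun k ↦ g^[k] a).Finite
  · exact Or.inl (hfin.inter_of_left A)
  have htendsto : Tendsto (fun k ↦ g^[k] a) atTop cofinite :=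
    Nat.cofinite_eq_atTop ▸ (injective_iterate_of_infinite_range hfin).tendsto_cofinite
  refine finite_range_inter_or_diff_of_eventually ?_
  filter_upwards [htendsto.eventually hA.mem_iff] with k hk
  rwa [Function.iterate_succ_apply']

end Sequences

theorem setEqStar_iff_eventuallyEq {A B : Set ℕ} : SetEqStar A B ↔ A =ᶠ[cofinite] B := by
  have hset : symmDiff A B = {x | ¬(x ∈ A ↔ x ∈ B)} := by
    ext x
    simp only [mem_symmDiff, mem_ofPred_eq]
    tauto
  rw [SetEqStar, hset, ← eventually_cofinite, eventuallyEq_set]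

namespace AlmostPerm

variable {f : AlmostPerm} {A : Set ℕ} {m n : ℕ}

/-- The inverse almost permutation `f⁻¹`, from `ran f` to `dom f`. Its values outside `ran f` are
junk, so `f.symm.symm = f` fails in general. -/
noncomputable def symm (f : AlmostPerm) : AlmostPerm where
  dom := f.ran
  toFun := Function.invFunOn f.toFun f.dom
  cofinite_dom := f.cofinite_ran
  injOn := Function.invFunOn_injOn_image f.toFun f.dom
  cofinite_ran := by
    rw [ran, f.injOn.invFunOn_image Subset.rfl]
    exact f.cofinite_dom

theorem symm_apply_apply (hn : n ∈ f.dom) : f.symm.toFun (f.toFun n) = n :=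
  f.injOn.leftInvOn_invFunOn hn

theorem ran_symm (f : AlmostPerm) : f.symm.ran = f.dom :=
  f.injOn.invFunOn_image Subset.rfl

theorem step_symm (f : AlmostPerm) : f.symm.step = Function.swap f.step := by
  ext b a
  constructor
  · rintro ⟨⟨c, hc, rfl⟩, rfl⟩
    rw [symm_apply_apply hc]
    exact ⟨hc, rfl⟩
  · rintro ⟨ha, rfl⟩
    exact ⟨mem_image_of_mem f.toFun ha, symm_apply_apply ha⟩

theorem image_symm (f : AlmostPerm) (A : Set ℕ) : f.symm.image A = f.dom ∩ f.toFun ⁻¹' A := by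
  ext a
  constructor
  · rintro ⟨_, ⟨hA, c, hc, rfl⟩, rfl⟩
    rw [symm_apply_apply hc]
    exact ⟨hc, hA⟩
  · rintro ⟨ha, hA⟩
    exact ⟨f.toFun a, ⟨hA, mem_image_of_mem f.toFun ha⟩, symm_apply_apply ha⟩

theorem eventually_mem_dom (f : AlmostPerm) : ∀ᶠ a in cofinite, a ∈ f.dom :=
  f.cofinite_dom

theorem tendsto_cofinite (f : AlmostPerm) : Tendsto f.toFun cofinite cofinite := by
  refine Tendsto.cofinite_of_finite_preimage_singleton fun b ↦ ?_
  have hsub : (f.dom ∩ f.toFun ⁻¹' {b}).Subsingleton := fun x hx y hy ↦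
    f.injOn hx.1 hy.1 (hx.2.trans hy.2.symm)
  refine (f.cofinite_dom.union hsub.finite).subset fun x hx ↦ ?_
  by_cases hdom : x ∈ f.dom
  · exact Or.inr ⟨hdom, hx⟩
  · exact Or.inl hdom

theorem eventuallyEq_preimage (h : SetEqStar (f.image A) A) : A =ᶠ[cofinite] f.toFun ⁻¹' A := by
  have hpull : ∀ᶠ a in cofinite, f.toFun a ∈ f.image A ↔ f.toFun a ∈ A :=
    f.tendsto_cofinite.eventually (setEqStar_iff_eventuallyEq.1 h).mem_iff
  rw [eventuallyEq_set]
  filter_upwards [hpull, f.eventually_mem_dom] with a hiff ha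
  rw [mem_preimage, ← hiff, image, f.injOn.mem_image_iff inter_subset_right ha]
  exact (and_iff_left ha).symm

theorem setEqStar_image_symm (h : SetEqStar (f.image A) A) : SetEqStar (f.symm.image A) A := by
  rw [setEqStar_iff_eventuallyEq, image_symm, eventuallyEq_set]
  filter_upwards [(eventuallyEq_preimage h).mem_iff, f.eventually_mem_dom] with a hiff ha
  exact (and_iff_right ha).trans hiff.symm

/-- The forward orbit `{f^k(n) : k ≥ 0}`. -/
def forwardOrbit (f : AlmostPerm) (n : ℕ) : Set ℕ := {m | Relation.ReflTransGen f.step n m}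

/-- The backward orbit `{f^k(n) : k ≤ 0}`. -/
def backwardOrbit (f : AlmostPerm) (n : ℕ) : Set ℕ := {m | Relation.ReflTransGen f.step m n}

theorem posOrbit_subset_forwardOrbit (f : AlmostPerm) (n : ℕ) :
    f.posOrbit n ⊆ f.forwardOrbit n :=
  fun _ ↦ Relation.TransGen.to_reflTransGen

theorem negOrbit_subset_backwardOrbit (f : AlmostPerm) (n : ℕ) :
    f.negOrbit n ⊆ f.backwardOrbit n :=
  fun _ ↦ Relation.TransGen.to_reflTransGen

theorem forwardOrbit_symm (f : AlmostPerm) (n : ℕ) : f.symm.forwardOrbit n = f.backwardOrbit n := by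
  ext m
  rw [forwardOrbit, step_symm]
  exact Relation.reflTransGen_swap

theorem backwardOrbit_symm (f : AlmostPerm) (n : ℕ) :
    f.symm.backwardOrbit n = f.forwardOrbit n := by
  ext m
  rw [backwardOrbit, step_symm]
  exact Relation.reflTransGen_swap

theorem orbit_eq_union (f : AlmostPerm) (n : ℕ) :
    f.orbit n = f.forwardOrbit n ∪ f.backwardOrbit n :=
  rfl

theorem orbit_symm (f : AlmostPerm) (n : ℕ) : f.symm.orbit n = f.orbit n := by
  rw [orbit_eq_union, orbit_eq_union, forwardOrbit_symm, backwardOrbit_symm, union_comm]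

theorem rightUnique_step (f : AlmostPerm) : Relator.RightUnique f.step :=
  fun _ _ _ hb hc ↦ hb.2.symm.trans hc.2

theorem forwardOrbit_subset_orbit (h : n ∈ f.forwardOrbit m) : f.forwardOrbit m ⊆ f.orbit n :=
  fun _ hx ↦ Relation.ReflTransGen.total_of_right_unique f.rightUnique_step h hx

theorem backwardOrbit_subset_orbit (h : n ∈ f.backwardOrbit m) :
    f.backwardOrbit m ⊆ f.orbit n := by
  rw [← forwardOrbit_symm] at h ⊢
  rw [← orbit_symm]
  exact forwardOrbit_subset_orbit h

theorem backwardOrbit_eq_singleton (hm : m ∉ f.ran) : f.backwardOrbit m = {m} := by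
  refine Subset.antisymm (fun x hx ↦ ?_) (singleton_subset_iff.2 Relation.ReflTransGen.refl)
  rcases Relation.ReflTransGen.cases_tail hx with rfl | ⟨c, -, hc⟩
  · exact mem_singleton m
  · exact absurd ⟨c, hc⟩ hm

theorem orbit_eq_forwardOrbit (hm : m ∉ f.ran) (hmn : n ∈ f.forwardOrbit m) :
    f.orbit n = f.forwardOrbit m := by
  refine Subset.antisymm (union_subset (fun x hx ↦ hmn.trans hx) ?_) (forwardOrbit_subset_orbit hmn)
  calc f.backwardOrbit n
    _ ⊆ f.orbit m := backwardOrbit_subset_orbit hmn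
    _ = f.forwardOrbit m ∪ {m} := by rw [orbit_eq_union, backwardOrbit_eq_singleton hm]
    _ ⊆ f.forwardOrbit m :=
      union_subset Subset.rfl (singleton_subset_iff.2 Relation.ReflTransGen.refl)

theorem orbit_eq_backwardOrbit (hm : m ∉ f.dom) (hnm : n ∈ f.backwardOrbit m) :
    f.orbit n = f.backwardOrbit m := by
  rw [← ran_symm] at hm
  rw [← forwardOrbit_symm] at hnm ⊢
  rw [← orbit_symm]
  exact orbit_eq_forwardOrbit hm hnm

theorem GoodOrbit.exists_subset_forwardOrbit_or_backwardOrbit {O : Set ℕ} (hO : f.GoodOrbit O) :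
    ∃ n, O ⊆ f.forwardOrbit n ∨ O ⊆ f.backwardOrbit n := by
  rcases hO with ⟨n, -, rfl, m, hmn, hm⟩ | ⟨n, -, rfl, m, hnm, hm⟩ | ⟨n, -, rfl | rfl⟩
  · exact ⟨m, Or.inl (orbit_eq_forwardOrbit hm hmn.to_reflTransGen).subset⟩
  · exact ⟨m, Or.inr (orbit_eq_backwardOrbit hm hnm.to_reflTransGen).subset⟩
  · exact ⟨n, Or.inl (f.posOrbit_subset_forwardOrbit n)⟩
  · exact ⟨n, Or.inr (f.negOrbit_subset_backwardOrbit n)⟩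

theorem forwardOrbit_subset_range_iterate (f : AlmostPerm) (n : ℕ) :
    f.forwardOrbit n ⊆ range fun k ↦ f.toFun^[k] n := by
  intro m hm
  induction hm with
  | refl => exact ⟨0, rfl⟩
  | tail _ hstep ih =>
    obtain ⟨k, rfl⟩ := ih
    exact ⟨k + 1, (Function.iterate_succ_apply' f.toFun k n).trans hstep.2⟩

theorem finite_forwardOrbit_inter_or_diff (h : SetEqStar (f.image A) A) (n : ℕ) :
    (f.forwardOrbit n ∩ A).Finite ∨ (f.forwardOrbit n \ A).Finite :=
  (finite_range_iterate_inter_or_diff (eventuallyEq_preimage h) n).imp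
    (fun hfin ↦ hfin.subset (inter_subset_inter_left A (f.forwardOrbit_subset_range_iterate n)))
    (fun hfin ↦ hfin.subset (sdiff_subset_sdiff_left (f.forwardOrbit_subset_range_iterate n)))

theorem finite_backwardOrbit_inter_or_diff (h : SetEqStar (f.image A) A) (n : ℕ) :
    (f.backwardOrbit n ∩ A).Finite ∨ (f.backwardOrbit n \ A).Finite := by
  rw [← forwardOrbit_symm]
  exact finite_forwardOrbit_inter_or_diff (setEqStar_image_symm h) n

end AlmostPerm

theorem not_fixed_of_splits_orbit_general (f : AlmostPerm) (O : Set ℕ)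
    (hO : ∃ n, O ⊆ f.forwardOrbit n ∨ O ⊆ f.backwardOrbit n) (A : Set ℕ)
    (h1 : (O ∩ A).Infinite) (h2 : (O \ A).Infinite) :
    ¬ SetEqStar (f.image A) A := by
  intro hfix
  obtain ⟨P, hOP, hP⟩ : ∃ P, O ⊆ P ∧ ((P ∩ A).Finite ∨ (P \ A).Finite) := by
    obtain ⟨n, hn | hn⟩ := hO
    · exact ⟨_, hn, AlmostPerm.finite_forwardOrbit_inter_or_diff hfix n⟩
    · exact ⟨_, hn, AlmostPerm.finite_backwardOrbit_inter_or_diff hfix n⟩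
  rcases hP with hinter | hdiff
  · exact h1 (hinter.subset (inter_subset_inter_left A hOP))
  · exact h2 (hdiff.subset (sdiff_subset_sdiff_left hOP))

/-- If `O` is an ℕ-like orbit, a reverse ℕ-like orbit, or
one of the half-orbits `O⁺_f(n)`, `O⁻_f(n)` of a ℤ-like orbit, and both
`O ∩ A` and `O \ A` are infinite, then `f[A]` is not almost equal to `A`
(so `[A] ∉ FIX_{α_f}`). -/
theorem not_fixed_of_splits_orbit (f : AlmostPerm) (O : Set ℕ)
    (hO : f.GoodOrbit O) (A : Set ℕ)
    (h1 : (O ∩ A).Infinite) (h2 : (O \ A).Infinite) :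
    ¬ SetEqStar (f.image A) A :=
  not_fixed_of_splits_orbit_general f O hO.exists_subset_forwardOrbit_or_backwardOrbit A h1 h2
end
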